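/- arXiv:2109.00117 — 3 statements merged into one kernel-verified Lean document; each statement's English description precedes it below -/
import Mathlib

section
/- For every integer n ≥ 1 there exists a state T, reachable from ₀(n) by split moves only and in which no split is legal (every entry of T is 0 or 1), such that the least index i₀ with T i₀ = 1 satisfies (i₀ : ℝ) ≤ −n + log_φ n + 1. -/
noncomputable section

/-- The golden ratio. -/
def phi : ℝ := (1 + Real.sqrt 5) / 2

/-- Base-φ logarithm. -/
def logphi (x : ℝ) : ℝ := Real.logb phi x

/-- A Bergman state: a finitely supported function from ℤ to ℕ. -/
abbrev BState := ℤ →₀ ℕ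

/-- A split move at index `i`. -/
def SplitAt (S S' : BState) (i : ℤ) : Prop :=
  2 ≤ S i ∧
    S' = S - Finsupp.single i 2 + Finsupp.single (i + 1) 1 + Finsupp.single (i - 2) 1

/-- A combine move at index `i`. -/
def CombineAt (S S' : BState) (i : ℤ) : Prop :=
  1 ≤ S i ∧ 1 ≤ S (i + 1) ∧
    S' = S - Finsupp.single i 1 - Finsupp.single (i + 1) 1 + Finsupp.single (i + 2) 1

/-- A move is a split or a combine. -/
def Move (S S' : BState) : Prop := (∃ i, SplitAt S S' i) ∨ (∃ i, CombineAt S S' i)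

/-- Terminal state: no move is legal. -/
def Terminal (S : BState) : Prop :=
  (∀ i, S i ≤ 1) ∧ ∀ i, ¬(1 ≤ S i ∧ 1 ≤ S (i + 1))

/-- A Bergman game of length `m` from `S`. -/
def Game (S : BState) (m : ℕ) (g : ℕ → BState) : Prop :=
  g 0 = S ∧ ∀ j < m, Move (g j) (g (j + 1))

/-- A complete Bergman game of length `m` from `S`. -/
def CompleteGame (S : BState) (m : ℕ) (g : ℕ → BState) : Prop :=
  Game S m g ∧ Terminal (g m)

/-- Reachability by a finite sequence of moves. -/
def Reachable : BState → BState → Prop := Relation.ReflTransGen Move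

/-- Reachability by split moves only. -/
def SplitReachable : BState → BState → Prop :=
  Relation.ReflTransGen fun S S' => ∃ i, SplitAt S S' i

/-- The initial state `₀(n)`: `n` chips at index 0. -/
def initState (n : ℕ) : BState := Finsupp.single 0 n

/-- Total number of chips in a state. -/
def chips (S : BState) : ℕ := S.sum fun _ c => c

open Classical in
/-- The number of split moves among the first `m` steps of `g`. -/
def splitCount (g : ℕ → BState) (m : ℕ) : ℕ :=
  ((Finset.range m).filter fun j => ∃ i, SplitAt (g j) (g (j + 1)) i).card

open Classical in
/-- The number of combine moves among the first `m` steps of `g`. -/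
def combineCount (g : ℕ → BState) (m : ℕ) : ℕ :=
  ((Finset.range m).filter fun j => ∃ i, CombineAt (g j) (g (j + 1)) i).card


theorem phi_gt_one : 1 < phi := by
  have : (1:ℝ) < Real.sqrt 5 := by
    rw [Real.lt_sqrt] <;> norm_num
  unfold phi; linarith

theorem phi_sq : phi ^ 2 = phi + 1 := by
  have : Real.sqrt 5 ^ 2 = 5 := Real.sq_sqrt (by norm_num)
  unfold phi; nlinarith

/-- value of a state -/
def bval (S : BState) : ℝ := S.sum fun i c => (c : ℝ) * phi ^ i

theorem bval_add (S T : BState) : bval (S + T) = bval S + bval T := by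
  unfold bval
  apply Finsupp.sum_add_index'
  · intro a; simp
  · intro a b c; push_cast; ring

theorem bval_single (i : ℤ) (c : ℕ) : bval (Finsupp.single i c) = c * phi ^ i := by
  unfold bval
  rw [Finsupp.sum_single_index]; simp

theorem bval_nonneg (S : BState) : 0 ≤ bval S := by
  unfold bval
  apply Finset.sum_nonneg
  intro i _
  have := phi_gt_one
  positivity

theorem chips_add' (S T : BState) : chips (S + T) = chips S + chips T := by
  unfold chips
  apply Finsupp.sum_add_index' <;> simp

theorem chips_single' (i : ℤ) (c : ℕ) : chips (Finsupp.single i c) = c := by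
  unfold chips
  rw [Finsupp.sum_single_index]; rfl

theorem extract (S : BState) (i : ℤ) (c : ℕ) (h : c ≤ S i) :
    S = (S - Finsupp.single i c) + Finsupp.single i c := by
  ext j
  by_cases hj : i = j
  · subst hj; simp; omega
  · simp [Finsupp.single_apply, hj]

theorem phi_split (i : ℤ) : 2 * phi ^ i = phi ^ (i + 1) + phi ^ (i - 2) := by
  have h0 : phi ≠ 0 := by have := phi_gt_one; positivity
  have h2 := phi_sq
  have e1 : phi ^ i = phi ^ (i - 2) * phi ^ 2 := by
    rw [← zpow_natCast, ← zpow_add₀ h0]; congr 1; push_cast; ring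
  have e2 : phi ^ (i + 1) = phi ^ (i - 2) * (phi ^ 2 * phi) := by
    rw [← pow_succ, ← zpow_natCast, ← zpow_add₀ h0]; congr 1; push_cast; ring
  rw [e1, e2, h2]
  linear_combination (-phi ^ (i - 2)) * h2

theorem step_inv {S S' : BState} {i : ℤ} (h : SplitAt S S' i) :
    bval S' = bval S ∧ chips S' = chips S := by
  obtain ⟨h1, h2⟩ := h
  have h3 := extract S i 2 h1
  generalize S - Finsupp.single i 2 = R at *
  subst h2 h3
  simp only [bval_add, chips_add', bval_single, chips_single']
  have := phi_split i
  constructor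
  · push_cast; linarith
  · trivial

theorem reach_inv {S S' : BState} (h : SplitReachable S S') :
    bval S' = bval S ∧ chips S' = chips S := by
  induction h with
  | refl => simp
  | tail _ h ih =>
    obtain ⟨i, hi⟩ := h
    have := step_inv hi
    exact ⟨this.1.trans ih.1, this.2.trans ih.2⟩

theorem step_mk (R : BState) (i : ℤ) :
    SplitAt (R + Finsupp.single i 2) (R + Finsupp.single (i + 1) 1 + Finsupp.single (i - 2) 1) i := by
  constructor
  · simp
  · rw [add_tsub_cancel_right]

theorem reach_add {S S' : BState} (U : BState) (h : SplitReachable S S') :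
    SplitReachable (S + U) (S' + U) := by
  induction h with
  | refl => exact Relation.ReflTransGen.refl
  | tail _ h ih =>
    obtain ⟨i, h1, h2⟩ := h
    refine Relation.ReflTransGen.tail ih ⟨i, ?_⟩
    rename_i b c _
    have h3 := extract b i 2 h1
    generalize b - Finsupp.single i 2 = R at *
    subst h2 h3
    convert step_mk (R + U) i using 1 <;> abel

theorem stab_aux (n : ℕ)
    (ih : ∀ S : BState, chips S = n → ∃ T, SplitReachable S T ∧ ∀ i, T i ≤ 1) (V : ℝ) (k : ℕ) :
    ∀ (S : BState) (t : ℤ), chips S = n → bval (S + Finsupp.single t 1) = V →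
      V < phi ^ (t + k) → ∃ T, SplitReachable (S + Finsupp.single t 1) T ∧ ∀ i, T i ≤ 1 := by
  induction k with
  | zero =>
    intro S t _ hV hlt
    have := bval_nonneg S
    rw [bval_add, bval_single] at hV
    simp at hV hlt
    linarith
  | succ k ihk =>
    intro S t hS hV hlt
    obtain ⟨R, hR, hR1⟩ := ih S hS
    have hr := reach_add (Finsupp.single t 1) hR
    by_cases h0 : R t = 0
    · refine ⟨_, hr, fun i => ?_⟩
      by_cases hi : t = i
      · subst hi; simp [h0]
      · simpa [Finsupp.single_apply, hi] using hR1 i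
    · have h3 := extract R t 1 (by omega)
      generalize R - Finsupp.single t 1 = Q at h3
      have hs := step_mk Q t
      have e : R + Finsupp.single t 1 = Q + Finsupp.single t 2 := by
        rw [h3, add_assoc, ← Finsupp.single_add]
      rw [e] at hr
      have e2 : Q + Finsupp.single (t + 1) 1 + Finsupp.single (t - 2) 1 =
          (Q + Finsupp.single (t - 2) 1) + Finsupp.single (t + 1) 1 := by abel
      rw [e2] at hs
      have hr2 : SplitReachable (S + Finsupp.single t 1)
          ((Q + Finsupp.single (t - 2) 1) + Finsupp.single (t + 1) 1) :=
        Relation.ReflTransGen.tail hr ⟨t, hs⟩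
      have hinv := reach_inv hr2
      obtain ⟨T, hT, hT1⟩ := ihk (Q + Finsupp.single (t - 2) 1) (t + 1)
        (by
          have := hinv.2
          simp only [chips_add', chips_single'] at this ⊢
          omega)
        (hinv.1.trans hV)
        (by
          convert hlt using 2
          push_cast; ring)
      exact ⟨T, Relation.ReflTransGen.trans hr2 hT, hT1⟩

theorem stab (n : ℕ) :
    ∀ S : BState, chips S = n → ∃ T, SplitReachable S T ∧ ∀ i, T i ≤ 1 := by
  induction n with
  | zero =>
    intro S hS
    refine ⟨S, Relation.ReflTransGen.refl, fun i => ?_⟩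
    by_contra h
    have h3 := extract S i 1 (by omega)
    rw [h3, chips_add', chips_single'] at hS
    omega
  | succ n ih =>
    intro S hS
    have hex : ∃ t, S t ≠ 0 := by
      by_contra! h
      have : S = 0 := Finsupp.ext h
      subst this
      simp [chips] at hS
    obtain ⟨t, ht⟩ := hex
    have h3 := extract S t 1 (by omega)
    generalize S - Finsupp.single t 1 = Q at h3
    subst h3
    have hp := phi_gt_one
    obtain ⟨k, hk⟩ := pow_unbounded_of_one_lt
      (bval (Q + Finsupp.single t 1) / phi ^ t) hp
    refine stab_aux n ih _ k Q t ?_ rfl ?_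
    · rw [chips_add', chips_single'] at hS; omega
    · rw [div_lt_iff₀ (by positivity)] at hk
      rw [zpow_add₀ (by positivity), zpow_natCast, mul_comm]
      exact hk

theorem bergman_phase_one_leftmost (n : ℕ) (hn : 1 ≤ n) :
    ∃ (T : BState) (i₀ : ℤ), SplitReachable (initState n) T ∧ (∀ i, T i ≤ 1) ∧
      T i₀ = 1 ∧ (∀ j < i₀, T j = 0) ∧ (i₀ : ℝ) ≤ -(n : ℝ) + logphi n + 1 := by
  obtain ⟨T, hT, hT1⟩ := stab n (initState n) (chips_single' 0 n)
  obtain ⟨hv, hc⟩ := reach_inv hT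
  simp only [initState, bval_single, chips_single', zpow_zero, mul_one] at hv hc
  have hp := phi_gt_one
  have hcard : n ≤ T.support.card := by
    rw [← hc, Finset.card_eq_sum_ones]
    exact Finset.sum_le_sum fun i _ => hT1 i
  have hne : T.support.Nonempty := Finset.card_pos.mp (by omega)
  have hmin := T.support.min'_mem hne
  have hmax := T.support.max'_mem hne
  have hle : ∀ j ∈ T.support, T.support.min' hne ≤ j := fun j hj => T.support.min'_le j hj
  have hge : ∀ j ∈ T.support, j ≤ T.support.max' hne := fun j hj => T.support.le_max' j hj
  generalize T.support.min' hne = a at *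
  generalize T.support.max' hne = b at *
  refine ⟨T, a, hT, hT1, ?_, ?_, ?_⟩
  · have := hT1 a
    rw [Finsupp.mem_support_iff] at hmin
    omega
  · intro j hj
    by_contra h
    have := hle j (Finsupp.mem_support_iff.mpr h)
    omega
  · have hsub : T.support ⊆ Finset.Icc a b := fun j hj =>
      Finset.mem_Icc.mpr ⟨hle j hj, hge j hj⟩
    have h1 := Finset.card_le_card hsub
    rw [Int.card_Icc] at h1
    have h2 : a + n ≤ b + 1 := by omega
    have h2' : (a : ℝ) + n ≤ b + 1 := by exact_mod_cast h2
    rw [Finsupp.mem_support_iff] at hmax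
    have h3 := extract T b 1 (by omega)
    rw [h3, bval_add, bval_single] at hv
    have h4 := bval_nonneg (T - Finsupp.single b 1)
    have h5 : phi ^ b ≤ (n : ℝ) := by push_cast at hv; linarith
    have h6 : (b : ℝ) ≤ logphi n := by
      unfold logphi
      rw [Real.le_logb_iff_rpow_le hp (by exact_mod_cast hn), Real.rpow_intCast]
      exact h5
    linarith
end
end

section
/- For every integer n ≥ 1, every terminal state T reachable from ₀(n) by Bergman moves, and every index i with T i = 1, one has (i : ℝ) ≥ −log_φ n − 2; that is, the leftmost chip of the final state of any complete Bergman game on ₀(n) lies at an index at least −log_φ n − 2. -/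
noncomputable section

/-- Conjugate value of a state. -/
def cval (S : BState) : ℝ := S.sum fun j c => (c : ℝ) * Real.goldenConj ^ j

lemma cval_add (S T : BState) : cval (S + T) = cval S + cval T := by
  unfold cval
  apply Finsupp.sum_add_index'
  · intro a; simp
  · intro a b c; push_cast; ring

lemma cval_single (i : ℤ) (c : ℕ) :
    cval (Finsupp.single i c) = (c : ℝ) * Real.goldenConj ^ i := by
  unfold cval
  apply Finsupp.sum_single_index
  simp

lemma psi_ne : Real.goldenConj ≠ 0 := Real.goldenConj_ne_zero

lemma cval_move {S S' : BState} (h : Move S S') : cval S' = cval S := by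
  have h2 : Real.goldenConj ^ 2 = Real.goldenConj + 1 := Real.goldenConj_sq
  rcases h with ⟨i, h1, rfl⟩ | ⟨i, h1, h3, rfl⟩
  · have e : S - Finsupp.single i 2 + Finsupp.single i 2 = S := by
      apply tsub_add_cancel_of_le
      simpa using h1
    have e' := congrArg cval e
    rw [cval_add, cval_single] at e'
    rw [cval_add, cval_add, cval_single, cval_single, ← e', zpow_add₀ psi_ne, zpow_sub₀ psi_ne]
    have h4 : Real.goldenConj ^ (2:ℤ) = Real.goldenConj + 1 := by exact_mod_cast h2
    have h5 : Real.goldenConj + 1 ≠ 0 := by rw [← h2]; exact pow_ne_zero _ psi_ne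
    rw [h4]
    push_cast
    have key : ∀ x y c : ℝ, x ^ 2 = x + 1 → x + 1 ≠ 0 →
        c + 1 * (y * x ^ (1:ℤ)) + 1 * (y / (x + 1)) = c + 2 * y := by
      intro x y c hx hx'
      rw [zpow_one]
      field_simp
      linear_combination y * hx
    exact key _ _ _ h2 h5
  · have e1 : S - Finsupp.single i 1 + Finsupp.single i 1 = S := by
      apply tsub_add_cancel_of_le
      simpa using h1
    have e2 : S - Finsupp.single i 1 - Finsupp.single (i+1) 1 + Finsupp.single (i+1) 1
        = S - Finsupp.single i 1 := by
      apply tsub_add_cancel_of_le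
      simpa using h3
    have e1' := congrArg cval e1
    have e2' := congrArg cval e2
    rw [cval_add, cval_single] at e1' e2'
    rw [cval_add, cval_single, ← e1', ← e2', zpow_add₀ psi_ne, zpow_add₀ psi_ne]
    have h4 : Real.goldenConj ^ (2:ℤ) = Real.goldenConj + 1 := by exact_mod_cast h2
    rw [h4]
    push_cast
    simp only [zpow_one]
    ring

lemma cval_reach {S S' : BState} (h : Reachable S S') : cval S' = cval S := by
  induction h with
  | refl => rfl
  | tail _ hm ih => rw [cval_move hm, ih]

lemma gr_rec (b : ℤ) : Real.goldenRatio ^ (-b) + Real.goldenRatio ^ (-b - 1)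
    = Real.goldenRatio ^ (-b + 1) := by
  have h2 : Real.goldenRatio ^ 2 = Real.goldenRatio + 1 := Real.goldenRatio_sq
  have h0 : Real.goldenRatio ≠ 0 := Real.goldenRatio_ne_zero
  generalize Real.goldenRatio = x at *
  rw [zpow_sub₀ h0, zpow_add₀ h0, zpow_one]
  field_simp
  linear_combination -h2

lemma sum_bound (k : ℕ) : ∀ (s : Finset ℤ) (a : ℤ), s.card = k → (∀ j ∈ s, a ≤ j) →
    (∀ j ∈ s, j + 1 ∉ s) →
    ∑ j ∈ s, Real.goldenRatio ^ (-j) ≤ Real.goldenRatio ^ (-a + 1) := by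
  induction k with
  | zero =>
    intro s a hc _ _
    rw [Finset.card_eq_zero] at hc
    subst hc
    simp only [Finset.sum_empty]
    exact (zpow_pos Real.goldenRatio_pos _).le
  | succ k ih =>
    intro s a hc ha hn
    have hne : s.Nonempty := by
      rw [← Finset.card_pos]; omega
    set b := s.min' hne with hb
    have hbs : b ∈ s := Finset.min'_mem _ _
    have hmin : ∀ j ∈ s, b ≤ j := fun j hj => Finset.min'_le _ _ hj
    rw [← Finset.add_sum_erase s _ hbs]
    have h1 := ih (s.erase b) (b + 2) (by rw [Finset.card_erase_of_mem hbs]; omega) (by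
      intro j hj
      rw [Finset.mem_erase] at hj
      have h3 := hmin j hj.2
      have h4 : j ≠ b + 1 := by
        rintro rfl
        exact hn b hbs hj.2
      have := hj.1
      omega) (by
      intro j hj hj'
      exact hn j (Finset.mem_of_mem_erase hj) (Finset.mem_of_mem_erase hj'))
    have e : -(b + 2) + 1 = -b - 1 := by ring
    rw [e] at h1
    have h5 : Real.goldenRatio ^ (-b + 1) ≤ Real.goldenRatio ^ (-a + 1) := by
      apply zpow_le_zpow_right₀ Real.one_lt_goldenRatio.le
      have := ha b hbs
      omega
    linarith [gr_rec b]

lemma abs_psi_zpow (j : ℤ) : |Real.goldenConj ^ j| = Real.goldenRatio ^ (-j) := by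
  rw [abs_zpow, zpow_neg, ← inv_zpow, Real.inv_goldenRatio, abs_of_neg Real.goldenConj_neg]

/-- Every chip of a terminal state reachable from `₀(n)` lies at an index at least
`−log_φ n − 2`. -/
theorem bergman_final_left_bound (n : ℕ) (hn : 1 ≤ n)
    (T : BState) (hT : Reachable (initState n) T) (hterm : Terminal T)
    (i : ℤ) (hi : T i = 1) :
    -logphi n - 2 ≤ (i : ℝ) := by
  have hv : cval T = n := by
    rw [cval_reach hT, initState, cval_single]; simp
  obtain ⟨t1, t2⟩ := hterm
  have his : i ∈ T.support := by simp [hi]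
  have hne : T.support.Nonempty := ⟨i, his⟩
  set s := T.support with hs
  set b := s.min' hne with hb
  have hbs : b ∈ s := Finset.min'_mem _ _
  have hmin : ∀ j ∈ s, b ≤ j := fun j hj => Finset.min'_le _ _ hj
  have h1s : ∀ j ∈ s, 1 ≤ T j := by
    intro j hj
    exact Nat.one_le_iff_ne_zero.mpr (Finsupp.mem_support_iff.mp hj)
  have hno : ∀ j ∈ s, j + 1 ∉ s := fun j hj hj' => t2 j ⟨h1s j hj, h1s _ hj'⟩
  have hsum : cval T = ∑ j ∈ s, Real.goldenConj ^ j := by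
    unfold cval Finsupp.sum
    apply Finset.sum_congr rfl
    intro j hj
    have : T j = 1 := le_antisymm (t1 j) (h1s j hj)
    rw [this]; simp
  rw [← Finset.add_sum_erase s _ hbs, hv] at hsum
  have h1 := sum_bound _ (s.erase b) (b + 2) rfl (by
      intro j hj
      rw [Finset.mem_erase] at hj
      have h3 := hmin j hj.2
      have h4 : j ≠ b + 1 := by
        rintro h
        exact hno b hbs (h ▸ hj.2)
      have := hj.1
      omega) (by
      intro j hj hj'
      exact hno j (Finset.mem_of_mem_erase hj) (Finset.mem_of_mem_erase hj'))
  have h2 : |∑ j ∈ s.erase b, Real.goldenConj ^ j| ≤ Real.goldenRatio ^ (-(b + 2) + 1) := by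
    refine le_trans (Finset.abs_sum_le_sum_abs _ _) ?_
    simpa only [abs_psi_zpow] using h1
  have h3 : Real.goldenRatio ^ (-b) ≤ n + Real.goldenRatio ^ (-(b + 2) + 1) := by
    rw [← abs_psi_zpow b]
    have : Real.goldenConj ^ b = n - ∑ j ∈ s.erase b, Real.goldenConj ^ j := by linarith
    rw [this]
    refine le_trans (abs_sub _ _) ?_
    rw [Nat.abs_cast]
    linarith
  have h4 := gr_rec (b + 1)
  have e1 : -(b + 1) + 1 = -b := by ring
  have e2 : -(b + 2) + 1 = -(b + 1) := by ring
  rw [e1] at h4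
  rw [e2] at h3
  have h5 : Real.goldenRatio ^ (-(b + 1) - 1) ≤ n := by linarith
  have h6 : ((-(b + 1) - 1 : ℤ) : ℝ) ≤ logphi n := by
    unfold logphi
    have hphi : phi = Real.goldenRatio := rfl
    rw [hphi, Real.le_logb_iff_rpow_le Real.one_lt_goldenRatio (by exact_mod_cast hn),
      Real.rpow_intCast]
    exact h5
  have h7 : (b : ℝ) ≤ i := by exact_mod_cast hmin i his
  push_cast at h6
  linarith
end
end

section
/- Let S be a Bergman state in which every entry is 0 or 1 (so no split is legal) and in which some combine is legal, and let i be the largest index at which a combine is legal (i.e., S i = S(i+1) = 1 and there is no j > i with S j = S(j+1) = 1). Then the state S′ obtained by performing the combine at i again has every entry at most 1, so no split is legal in S′ either. Consequently, once no split is available, repeatedly performing the rightmost available combine never makes a split available again. -/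
noncomputable section

/-- If every entry of `S` is at most 1 and `i` is the largest index at which a combine is
legal, then performing the combine at `i` yields a state with every entry at most 1, so
no split becomes available. -/
theorem bergman_rightmost_combine_no_split (S : BState)
    (h01 : ∀ j, S j ≤ 1)
    (i : ℤ) (hi : S i = 1) (hi1 : S (i + 1) = 1)
    (hmax : ∀ j > i, ¬(S j = 1 ∧ S (j + 1) = 1))
    (S' : BState) (hS' : CombineAt S S' i) :
    ∀ j, S' j ≤ 1 := by
  obtain ⟨-, -, rfl⟩ := hS'
  intro j
  have h2 : S (i + 2) = 0 := by
    have h := hmax (i + 1) (by omega)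
    rw [show i + 1 + 1 = i + 2 by ring] at h
    have := h01 (i + 2)
    by_contra hne
    exact h ⟨hi1, by omega⟩
  have hj := h01 j
  simp only [Finsupp.add_apply, Finsupp.tsub_apply, Finsupp.single_apply]
  by_cases hji : i + 2 = j
  · subst hji
    simp [h2]
  · rw [if_neg hji]
    omega
end
end
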